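/- arXiv:2209.04379 — 7 statements merged into one kernel-verified Lean document; each statement's English description precedes it below -/
import Mathlib

section
/- (Proposition 1, concrete form.) Let n ≥ 1, let s : Fin n → ℕ be a monotone (nondecreasing) sequence of file sizes with s i ≥ 1, let p : Fin n → ℝ with p i ≥ 0, let c : ℝ with c ≥ 1, and let f : Fin n → ℕ be a padding scheme satisfying s i ≤ f i and (f i : ℝ) ≤ c * s i for all i. Define f* : Fin n → ℕ by f* i = the largest value s j (over j : Fin n) with s j ≤ f i (this set is nonempty since s i ≤ f i). Then: (1) for every i, s i ≤ f* i, f* i ≤ f i, and (f* i : ℝ) ≤ c * s i, so f* is a feasible padding scheme; (2) every value of f* lies in the range of s; and (3) the vulnerability of f* is at most that of f, i.e., ∑_{y ∈ image of f*} (max of p i over {i | f* i = y}) ≤ ∑_{y ∈ image of f} (max of p i over {i | f i = y}). -/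
/-- The vulnerability of a deterministic scheme `f` with weights `p`:
the sum, over the values `y` in the image of `f`, of the maximum of `p i` over
the preimage `{i | f i = y}`. -/
noncomputable def vuln {α β : Type*} [Fintype α] [DecidableEq β]
    (p : α → ℝ) (f : α → β) : ℝ :=
  ∑ y ∈ (Finset.univ.image f).attach,
    (Finset.univ.filter (fun i => f i = y.1)).sup'
      (by
        obtain ⟨i, -, hi⟩ := Finset.mem_image.mp y.2
        exact ⟨i, Finset.mem_filter.mpr ⟨Finset.mem_univ i, hi⟩⟩) p

/-- Vulnerability is monotone under post-processing (for nonnegative weights). -/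
theorem vuln_le_of_factor {α β γ : Type*} [Fintype α] [DecidableEq β] [DecidableEq γ]
    (p : α → ℝ) (hp : ∀ i, 0 ≤ p i) (f : α → β) (g : α → γ)
    (h : ∀ i j, f i = f j → g i = g j) : vuln p g ≤ vuln p f := by
  classical
  unfold vuln
  have key : ∀ y : {y // y ∈ Finset.univ.image g}, ∃ i, g i = y.1 ∧
      ∀ H, (Finset.univ.filter (fun i => g i = y.1)).sup' H p = p i := by
    intro y
    have H : (Finset.univ.filter (fun i => g i = y.1)).Nonempty := by
      obtain ⟨i, -, hi⟩ := Finset.mem_image.mp y.2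
      exact ⟨i, Finset.mem_filter.mpr ⟨Finset.mem_univ i, hi⟩⟩
    obtain ⟨i, hi, he⟩ := Finset.exists_mem_eq_sup' H p
    exact ⟨i, (Finset.mem_filter.mp hi).2, fun _ => he⟩
  choose k hk1 hk2 using key
  let φ : {y // y ∈ Finset.univ.image g} → {y // y ∈ Finset.univ.image f} :=
    fun y => ⟨f (k y), Finset.mem_image_of_mem f (Finset.mem_univ _)⟩
  have hφ : Function.Injective φ := by
    intro a b hab
    have h1 : f (k a) = f (k b) := congrArg Subtype.val hab
    have h2 := h _ _ h1
    rw [hk1, hk1] at h2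
    exact Subtype.ext h2
  have hle : ∀ i (y : β) (H : (Finset.univ.filter (fun i => f i = y)).Nonempty), f i = y →
      p i ≤ (Finset.univ.filter (fun i => f i = y)).sup' H p := by
    intro i y H hi
    exact Finset.le_sup' p (Finset.mem_filter.mpr ⟨Finset.mem_univ i, hi⟩)
  have hne : ∀ y : {y // y ∈ Finset.univ.image f},
      (Finset.univ.filter (fun i => f i = y.1)).Nonempty := by
    intro y
    obtain ⟨i, -, hi⟩ := Finset.mem_image.mp y.2
    exact ⟨i, Finset.mem_filter.mpr ⟨Finset.mem_univ i, hi⟩⟩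
  obtain ⟨S, hS⟩ : ∃ S : {y // y ∈ Finset.univ.image f} → ℝ,
      ∀ y H, (Finset.univ.filter (fun i => f i = y.1)).sup' H p = S y :=
    ⟨fun y => (Finset.univ.filter (fun i => f i = y.1)).sup' (hne y) p, fun _ _ => rfl⟩
  have hSle : ∀ i (y : {y // y ∈ Finset.univ.image f}), f i = y.1 → p i ≤ S y := by
    intro i y hi
    rw [← hS y (hne y)]
    exact hle i _ _ hi
  have hS0 : ∀ y, 0 ≤ S y := by
    intro y
    obtain ⟨i, -, hi⟩ := Finset.mem_image.mp y.2
    exact (hp i).trans (hSle i y hi)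
  have hmain : ∑ y ∈ (Finset.univ.image g).attach, p (k y) ≤
      ∑ y ∈ (Finset.univ.image f).attach, S y := by
    calc ∑ y ∈ (Finset.univ.image g).attach, p (k y)
        ≤ ∑ y ∈ (Finset.univ.image g).attach, S (φ y) :=
          Finset.sum_le_sum (fun y _ => hSle _ _ rfl)
      _ = ∑ y ∈ (Finset.univ.image g).attach.image φ, S y :=
          (Finset.sum_image hφ.injOn).symm
      _ ≤ _ := Finset.sum_le_sum_of_subset_of_nonneg
          (fun y _ => Finset.mem_attach _ y) (fun y _ _ => hS0 y)
  have e1 := Finset.sum_congr (rfl : (Finset.univ.image g).attach = _)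
    (fun y _ => hk2 y (by
      obtain ⟨i, -, hi⟩ := Finset.mem_image.mp y.2
      exact ⟨i, Finset.mem_filter.mpr ⟨Finset.mem_univ i, hi⟩⟩))
  have e2 := Finset.sum_congr (rfl : (Finset.univ.image f).attach = _)
    (fun y _ => hS y (hne y))
  exact e1.trans_le (hmain.trans e2.ge)

/-- Proposition 1, concrete form. Given a feasible padding scheme `f` for monotone
sizes `s` with constraint `c`, the scheme `f*` mapping each file to the largest file
size `s j` not exceeding `f i` is feasible, takes values in the range of `s`, and has
vulnerability at most that of `f`. -/
theorem prop1_concrete (n : ℕ) (hn : 1 ≤ n)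
    (s : Fin n → ℕ) (hmono : Monotone s) (hs : ∀ i, 1 ≤ s i)
    (p : Fin n → ℝ) (hp : ∀ i, 0 ≤ p i)
    (c : ℝ) (hc : 1 ≤ c)
    (f : Fin n → ℕ) (hf₁ : ∀ i, s i ≤ f i) (hf₂ : ∀ i, (f i : ℝ) ≤ c * s i)
    (fstar : Fin n → ℕ)
    (hfstar : ∀ i, IsGreatest {v | (∃ j, s j = v) ∧ v ≤ f i} (fstar i)) :
    (∀ i, s i ≤ fstar i ∧ fstar i ≤ f i ∧ (fstar i : ℝ) ≤ c * s i) ∧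
      (∀ i, fstar i ∈ Set.range s) ∧
      vuln p fstar ≤ vuln p f := by
  refine ⟨fun i => ⟨(hfstar i).2 ⟨⟨i, rfl⟩, hf₁ i⟩, (hfstar i).1.2, ?_⟩,
    fun i => (hfstar i).1.1, vuln_le_of_factor p hp f fstar fun i j hij => ?_⟩
  · exact le_trans (Nat.cast_le.mpr (hfstar i).1.2) (hf₂ i)
  · have hj := hfstar j
    rw [← hij] at hj
    exact (hfstar i).unique hj
end

section
/- (Corollary 1.) Let n ≥ 1, let s : Fin n → ℕ be monotone with s i ≥ 1, let p : Fin n → ℝ with p i ≥ 0, and let c : ℝ with c ≥ 1. Then there exists a padding scheme f* : Fin n → ℕ with s i ≤ f* i and (f* i : ℝ) ≤ c * s i for all i, such that every value of f* lies in the range of s, and such that for every padding scheme f : Fin n → ℕ satisfying the same constraints (s i ≤ f i ≤ c·s i), the vulnerability of f* is at most the vulnerability of f. In other words, a vulnerability-minimizing (equivalently, Rényi-min-entropy-leakage-minimizing) padding scheme exists that pads each file to the size of some file in the initial set. -/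
/-- Post-composition with any map does not increase the vulnerability. -/
theorem vuln_comp_le {α : Type*} [Fintype α] (p : α → ℝ) (hp : ∀ i, 0 ≤ p i)
    (f g : α → ℕ) (h : ℕ → ℕ) (hg : ∀ i, g i = h (f i)) : vuln p g ≤ vuln p f := by
  classical
  have key : ∀ y : {y // y ∈ Finset.univ.image g}, ∃ k : α, g k = y.1 ∧
      ∀ H, (Finset.univ.filter (fun i => g i = y.1)).sup' H p = p k := by
    intro y
    obtain ⟨i, -, hi⟩ := Finset.mem_image.mp y.2
    have H : (Finset.univ.filter (fun i => g i = y.1)).Nonempty :=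
      ⟨i, Finset.mem_filter.mpr ⟨Finset.mem_univ i, hi⟩⟩
    obtain ⟨k, hk, hk2⟩ := Finset.exists_mem_eq_sup' H p
    exact ⟨k, (Finset.mem_filter.mp hk).2, fun _ => hk2⟩
  choose k hk hk2 using key
  unfold vuln
  simp only [hk2]
  let e : {y // y ∈ Finset.univ.image g} → {y // y ∈ Finset.univ.image f} :=
    fun y => ⟨f (k y), Finset.mem_image_of_mem f (Finset.mem_univ _)⟩
  have he : Function.Injective e := by
    intro a b hab
    have h1 : f (k a) = f (k b) := congrArg Subtype.val hab
    apply Subtype.ext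
    rw [← hk a, ← hk b, hg, hg, h1]
  have hle : ∀ (z : {y // y ∈ Finset.univ.image f}) (i : α) (H) (_ : f i = z.1),
      p i ≤ (Finset.univ.filter (fun i => f i = z.1)).sup' H p := by
    intro z i H hi
    exact Finset.le_sup' p (Finset.mem_filter.mpr ⟨Finset.mem_univ i, hi⟩)
  have nn : ∀ (z : {y // y ∈ Finset.univ.image f}) H,
      0 ≤ (Finset.univ.filter (fun i => f i = z.1)).sup' H p := by
    intro z H
    obtain ⟨i, hi⟩ := id H
    exact (hp i).trans (hle z i H (Finset.mem_filter.mp hi).2)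
  have hne : ∀ z : {y // y ∈ Finset.univ.image f},
      (Finset.univ.filter (fun i => f i = z.1)).Nonempty := by
    intro z
    obtain ⟨i, -, hi⟩ := Finset.mem_image.mp z.2
    exact ⟨i, Finset.mem_filter.mpr ⟨Finset.mem_univ i, hi⟩⟩
  let W : {y // y ∈ Finset.univ.image f} → ℝ :=
    fun z => (Finset.univ.filter (fun i => f i = z.1)).sup' (hne z) p
  change _ ≤ ∑ z ∈ (Finset.univ.image f).attach, W z
  calc ∑ y ∈ (Finset.univ.image g).attach, p (k y)
      ≤ ∑ y ∈ (Finset.univ.image g).attach, W (e y) :=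
        Finset.sum_le_sum (fun y _ => hle (e y) (k y) (hne _) rfl)
    _ = ∑ z ∈ (Finset.univ.image g).attach.image e, W z :=
        (Finset.sum_image he.injOn).symm
    _ ≤ _ := Finset.sum_le_sum_of_subset_of_nonneg
        (fun z _ => Finset.mem_attach _ z) (fun z _ _ => nn z _)

/-- Corollary 1: there exists a vulnerability-minimizing padding scheme that pads
each file to the size of some file in the initial set. -/
theorem cor1_optimal_scheme_in_range (n : ℕ) (hn : 1 ≤ n)
    (s : Fin n → ℕ) (hmono : Monotone s) (hs : ∀ i, 1 ≤ s i)
    (p : Fin n → ℝ) (hp : ∀ i, 0 ≤ p i)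
    (c : ℝ) (hc : 1 ≤ c) :
    ∃ fstar : Fin n → ℕ,
      (∀ i, s i ≤ fstar i ∧ (fstar i : ℝ) ≤ c * s i) ∧
      (∀ i, fstar i ∈ Set.range s) ∧
      ∀ f : Fin n → ℕ, (∀ i, s i ≤ f i ∧ (f i : ℝ) ≤ c * s i) →
        vuln p fstar ≤ vuln p f := by
  classical
  let S : Set (Fin n → ℕ) :=
    {f | (∀ i, s i ≤ f i ∧ (f i : ℝ) ≤ c * s i) ∧ ∀ i, f i ∈ Set.range s}
  have hfin : S.Finite := by
    refine (Set.Finite.pi' (fun _ : Fin n => Set.finite_range s)).subset ?_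
    intro f hf
    exact hf.2
  have hne : S.Nonempty := by
    refine ⟨s, fun i => ⟨le_rfl, ?_⟩, fun i => ⟨i, rfl⟩⟩
    exact le_mul_of_one_le_left (Nat.cast_nonneg _) hc
  obtain ⟨F, hF, hmin⟩ := Set.exists_min_image S (vuln p) hfin hne
  refine ⟨F, hF.1, hF.2, fun f hf => ?_⟩
  let h : ℕ → ℕ := fun y => (Finset.univ.filter (fun i => f i = y)).sup s
  have hmem : ∀ i, ∃ j, f j = f i ∧ h (f i) = s j := by
    intro i
    obtain ⟨j, hj, hj2⟩ := Finset.exists_mem_eq_sup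
      (Finset.univ.filter (fun j => f j = f i)) ⟨i, by simp⟩ s
    exact ⟨j, (Finset.mem_filter.mp hj).2, hj2⟩
  refine (hmin (fun i => h (f i)) ⟨fun i => ⟨?_, ?_⟩, fun i => ?_⟩).trans
    (vuln_comp_le p hp f _ h (fun _ => rfl))
  · exact Finset.le_sup (f := s) (by simp)
  · obtain ⟨j, hj, hj2⟩ := hmem i
    have h1 : h (f i) ≤ f i := by rw [hj2, ← hj]; exact (hf j).1
    exact (Nat.cast_le.mpr h1).trans (hf i).2
  · obtain ⟨j, hj, hj2⟩ := hmem i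
    exact ⟨j, hj2.symm⟩
end

section
/- (Observation 1.) Let n, m ≥ 1, let p : Fin n → ℝ with p i ≥ 0, and let l, r : Fin n → Fin m be padding constraints with l i ≤ r i for all i. Let f : Fin n → Fin m be a feasible deterministic scheme (l i ≤ f i ≤ r i for all i), let i₀ be an index at which p attains its maximum over Fin n, and set j = f i₀. Define f* : Fin n → Fin m by f* i = j whenever l i ≤ j ≤ r i, and f* i = f i otherwise. Then f* is feasible and V(f*) ≤ V(f), where V(h) = ∑_{j' : Fin m} (max of p i over {i | h i = j'}, taken as 0 on the empty set). Consequently, if f minimizes V among feasible schemes, then so does f*, i.e., there is a min-vulnerability-optimal scheme in which every file i with l i ≤ j ≤ r i is padded to column j. -/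
/-- The vulnerability of a deterministic scheme `h : Fin n → Fin m` with
frequencies `p`: `∑_j max {p i | h i = j}`, the maximum of the empty set taken
to be `0`. -/
noncomputable def V {n m : ℕ} (p : Fin n → ℝ) (h : Fin n → Fin m) : ℝ :=
  ∑ j : Fin m, (Finset.univ.filter (fun i => h i = j)).fold max 0 p

/-- Observation 1: if `i₀` has maximal frequency and `j = f i₀`, moving every file
that may be padded to column `j` into column `j` yields a feasible scheme whose
vulnerability is no larger; in particular optimality is preserved. -/
theorem observation1 (n m : ℕ) (hn : 0 < n) (hm : 0 < m)
    (p : Fin n → ℝ) (hp : ∀ i, 0 ≤ p i)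
    (l r : Fin n → Fin m) (hlr : ∀ i, l i ≤ r i)
    (f : Fin n → Fin m) (hf : ∀ i, l i ≤ f i ∧ f i ≤ r i)
    (i₀ : Fin n) (hi₀ : ∀ i, p i ≤ p i₀)
    (fstar : Fin n → Fin m)
    (hfstar : ∀ i, fstar i = if l i ≤ f i₀ ∧ f i₀ ≤ r i then f i₀ else f i) :
    (∀ i, l i ≤ fstar i ∧ fstar i ≤ r i) ∧
      V p fstar ≤ V p f ∧
      ((∀ g : Fin n → Fin m, (∀ i, l i ≤ g i ∧ g i ≤ r i) → V p f ≤ V p g) →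
        ∀ g : Fin n → Fin m, (∀ i, l i ≤ g i ∧ g i ≤ r i) → V p fstar ≤ V p g) := by
  have hfeas : ∀ i, l i ≤ fstar i ∧ fstar i ≤ r i := by
    intro i
    rw [hfstar i]
    split_ifs with h
    · exact h
    · exact hf i
  have hV : V p fstar ≤ V p f := by
    unfold V
    refine Finset.sum_le_sum fun j _ => ?_
    rw [Finset.fold_max_le]
    refine ⟨?_, fun i hi => ?_⟩
    · rw [Finset.le_fold_max]
      exact Or.inl le_rfl
    · rw [Finset.le_fold_max]
      right
      have hij : fstar i = j := (Finset.mem_filter.mp hi).2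
      rw [hfstar i] at hij
      split_ifs at hij with h
      · exact ⟨i₀, Finset.mem_filter.mpr ⟨Finset.mem_univ _, hij⟩, hi₀ i⟩
      · exact ⟨i, Finset.mem_filter.mpr ⟨Finset.mem_univ _, hij⟩, le_rfl⟩
  exact ⟨hfeas, hV, fun hopt g hg => hV.trans (hopt g hg)⟩
end

section
/- (Observation 2.) Let n, m ≥ 1, let p : Fin n → ℝ with p i ≥ 0 and ∑ i, p i = 1, and let l, r : Fin n → Fin m with l i ≤ r i for all i. Let f : Fin n → Fin m be feasible (l i ≤ f i ≤ r i), define the output distribution q j = ∑_{i with f i = j} p i, and let j₀ : Fin m satisfy q j ≤ q j₀ for all j. Let i₀ : Fin n be an index with l i₀ ≤ j₀ ≤ r i₀, and let f* be f updated so that f* i₀ = j₀ (and f* i = f i for i ≠ i₀), with output distribution q*. Then f* is feasible and ∑_{j : Fin m} negMulLog (q* j) ≤ ∑_{j : Fin m} negMulLog (q j); that is, moving any file into the column with the highest output probability yields a padding scheme whose Shannon leakage (which for deterministic schemes equals the Shannon entropy of the output) is no larger. -/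
theorem negMulLog_transfer (a b d : ℝ) (hd : 0 ≤ d) (hdb : d ≤ b) (hba : b ≤ a) :
    Real.negMulLog (a + d) + Real.negMulLog (b - d) ≤ Real.negMulLog a + Real.negMulLog b := by
  rcases hd.eq_or_lt with h | h
  · subst h; simp
  have hL : 0 < a - b + 2 * d := by linarith
  have hx : b - d ∈ Set.Ici (0 : ℝ) := by simp [hdb]
  have hy : a + d ∈ Set.Ici (0 : ℝ) := by simp only [Set.mem_Ici]; linarith
  obtain ⟨t, ht⟩ : ∃ t, t = d / (a - b + 2 * d) := ⟨_, rfl⟩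
  have htL : t * (a - b + 2 * d) = d := by rw [ht]; exact div_mul_cancel₀ _ hL.ne'
  have ht0 : 0 ≤ t := by rw [ht]; positivity
  have ht1 : 0 ≤ 1 - t := by
    rw [ht, sub_nonneg, div_le_one hL]; linarith
  have h1 := Real.concaveOn_negMulLog.2 hx hy ht0 ht1 (by ring)
  have h2 := Real.concaveOn_negMulLog.2 hx hy ht1 ht0 (by ring)
  simp only [smul_eq_mul] at h1 h2
  have e1 : t * (b - d) + (1 - t) * (a + d) = a := by linarith
  have e2 : (1 - t) * (b - d) + t * (a + d) = b := by linarith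
  rw [e1] at h1
  rw [e2] at h2
  linarith

/-- Observation 2: moving any file into the column with the highest output probability
yields a feasible padding scheme whose output Shannon entropy (hence Shannon leakage)
is no larger. -/
theorem observation2 (n m : ℕ) (hn : 0 < n) (hm : 0 < m)
    (p : Fin n → ℝ) (hp : ∀ i, 0 ≤ p i) (hsum : ∑ i, p i = 1)
    (l r : Fin n → Fin m) (hlr : ∀ i, l i ≤ r i)
    (f : Fin n → Fin m) (hf : ∀ i, l i ≤ f i ∧ f i ≤ r i)
    (q : Fin m → ℝ) (hq : ∀ j, q j = ∑ i ∈ Finset.univ.filter (fun i => f i = j), p i)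
    (j₀ : Fin m) (hj₀ : ∀ j, q j ≤ q j₀)
    (i₀ : Fin n) (hi₀ : l i₀ ≤ j₀ ∧ j₀ ≤ r i₀)
    (fstar : Fin n → Fin m) (hfstar : ∀ i, fstar i = if i = i₀ then j₀ else f i)
    (qstar : Fin m → ℝ)
    (hqstar : ∀ j, qstar j = ∑ i ∈ Finset.univ.filter (fun i => fstar i = j), p i) :
    (∀ i, l i ≤ fstar i ∧ fstar i ≤ r i) ∧
      ∑ j : Fin m, Real.negMulLog (qstar j) ≤ ∑ j : Fin m, Real.negMulLog (q j) := by
  constructor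
  · intro i
    rw [hfstar]
    split_ifs with h
    · subst h; exact hi₀
    · exact hf i
  have key : ∀ j, qstar j - q j =
      (if j₀ = j then p i₀ else 0) - (if f i₀ = j then p i₀ else 0) := by
    intro j
    rw [hqstar, hq, Finset.sum_filter, Finset.sum_filter, ← Finset.sum_sub_distrib,
      Finset.sum_eq_single i₀]
    · simp [hfstar]
    · intro i _ hi
      simp [hfstar, hi]
    · simp
  by_cases hj : f i₀ = j₀
  · have : ∀ j, qstar j = q j := by
      intro j
      have := key j
      rw [hj] at this
      linarith
    simp [this]
  have ha : qstar j₀ = q j₀ + p i₀ := by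
    have := key j₀
    simp [hj] at this
    linarith
  have hb : qstar (f i₀) = q (f i₀) - p i₀ := by
    have := key (f i₀)
    simp [Ne.symm hj] at this
    linarith
  have hle : p i₀ ≤ q (f i₀) := by
    rw [hq]
    exact Finset.single_le_sum (f := p) (fun i _ => hp i) (by simp)
  have ht := negMulLog_transfer (q j₀) (q (f i₀)) (p i₀) (hp i₀) hle (hj₀ _)
  have hm1 : f i₀ ∈ Finset.univ.erase j₀ := by simp [hj]
  rw [← Finset.add_sum_erase _ _ (Finset.mem_univ j₀), ← Finset.add_sum_erase _ _ hm1,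
    ← Finset.add_sum_erase _ (fun j => Real.negMulLog (q j)) (Finset.mem_univ j₀),
    ← Finset.add_sum_erase _ (fun j => Real.negMulLog (q j)) hm1]
  have hrest : ∑ j ∈ (Finset.univ.erase j₀).erase (f i₀), Real.negMulLog (qstar j) =
      ∑ j ∈ (Finset.univ.erase j₀).erase (f i₀), Real.negMulLog (q j) := by
    refine Finset.sum_congr rfl fun j hjm => ?_
    simp only [Finset.mem_erase, Finset.mem_univ, and_true] at hjm
    have := key j
    rw [if_neg (Ne.symm hjm.2), if_neg (Ne.symm hjm.1)] at this
    rw [show qstar j = q j by linarith]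
  rw [hrest, ha, hb]
  linarith
end

section
/- (Structure of the optimal last column, from the Observation underlying PrpRe.) Let n, m ≥ 1, let b : Fin n → ℝ with b i ≥ 0, and let l, r : Fin n → Fin m with l i ≤ r i for all i. Let F be the set of feasible joint matrices: I : Fin n → Fin m → ℝ with I i j ≥ 0, ∑_j I i j = b i for every i, and I i j = 0 whenever j < l i or r i < j. Write last for the largest element of Fin m, let T = {i | l i = last}, assume T is nonempty, and let bmax = max over i ∈ T of b i. Then there exists a matrix I ∈ F that minimizes V(I) = ∑_j max_i I i j over F and that moreover satisfies: I i last = b i for every i ∈ T, and I i last = min (b i) bmax for every i ∉ T with r i = last. (Files of maximal size put all their mass in the last column; every other file that can be padded to the maximal size puts mass min(b i, bmax) there, preserving the column maximum bmax.) -/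
/-- A feasible joint distribution matrix: nonnegative entries, row sums equal to the
budgets `b`, support within the padding constraints `[l i, r i]`. -/
def FeasibleJoint {n m : ℕ} (b : Fin n → ℝ) (l r : Fin n → Fin m)
    (I : Fin n → Fin m → ℝ) : Prop :=
  (∀ i j, 0 ≤ I i j) ∧ (∀ i, ∑ j, I i j = b i) ∧
    (∀ i j, (j < l i ∨ r i < j) → I i j = 0)

/-- The vulnerability `∑_j max_i I i j` of a joint distribution matrix. -/
noncomputable def Vjoint {n m : ℕ} (hn : 0 < n) (I : Fin n → Fin m → ℝ) : ℝ :=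
  ∑ j : Fin m,
    Finset.univ.sup' (Finset.univ_nonempty_iff.mpr ⟨⟨0, hn⟩⟩) (fun i => I i j)

theorem exists_min_feasible {n m : ℕ} (hn : 0 < n)
    (b : Fin n → ℝ) (hb : ∀ i, 0 ≤ b i)
    (l r : Fin n → Fin m) (hlr : ∀ i, l i ≤ r i) :
    ∃ I, FeasibleJoint b l r I ∧
      ∀ J : Fin n → Fin m → ℝ, FeasibleJoint b l r J → Vjoint hn I ≤ Vjoint hn J := by
  have hcl : IsClosed {I : Fin n → Fin m → ℝ | FeasibleJoint b l r I} := by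
    unfold FeasibleJoint
    simp only [Set.setOf_and, Set.setOf_forall]
    refine IsClosed.inter ?_ (IsClosed.inter ?_ ?_)
    · exact isClosed_iInter fun i => isClosed_iInter fun j =>
        isClosed_le (by fun_prop) (by fun_prop)
    · exact isClosed_iInter fun i => isClosed_eq (by fun_prop) (by fun_prop)
    · exact isClosed_iInter fun i => isClosed_iInter fun j => isClosed_iInter fun _ =>
        isClosed_eq (by fun_prop) (by fun_prop)
  have hco : IsCompact {I : Fin n → Fin m → ℝ | FeasibleJoint b l r I} := by
    refine IsCompact.of_isClosed_subset
      (isCompact_Icc (a := fun _ _ => (0 : ℝ)) (b := fun i (_ : Fin m) => b i)) hcl ?_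
    rintro I ⟨h0, hs, -⟩
    refine ⟨fun i j => h0 i j, fun i j => ?_⟩
    change I i j ≤ b i
    rw [← hs i]
    exact Finset.single_le_sum (fun k _ => h0 i k) (Finset.mem_univ j)
  have hne : {I : Fin n → Fin m → ℝ | FeasibleJoint b l r I}.Nonempty := by
    refine ⟨fun i j => if j = l i then b i else 0, ?_, ?_, ?_⟩
    · intro i j
      dsimp only
      split_ifs
      · exact hb i
      · exact le_rfl
    · intro i
      simp
    · intro i j h
      have : j ≠ l i := by
        rintro rfl
        rcases h with h | h
        · exact lt_irrefl _ h
        · exact absurd (hlr i) (not_le.mpr h)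
      simp [this]
  have hcont : Continuous (fun I : Fin n → Fin m → ℝ => Vjoint hn I) := by
    unfold Vjoint
    refine continuous_finset_sum _ fun j _ => ?_
    exact Continuous.finset_sup'_apply _ (fun i _ => by fun_prop)
  obtain ⟨I, hI, hmin⟩ := hco.exists_isMinOn hne hcont.continuousOn
  exact ⟨I, hI, fun J hJ => hmin hJ⟩

/-- Redistribution of a single row to the prescribed value in the last column. -/
theorem row_fix {m : ℕ} (B c D : ℝ) (last p : Fin m) (hp : p ≠ last)
    (f u : Fin m → ℝ) (h0 : ∀ j, 0 ≤ f j) (hs : ∑ j, f j = B)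
    (hc0 : 0 ≤ c) (hcB : c ≤ B) (hD : 0 ≤ D) (hD' : f last - c ≤ D)
    (hu : ∀ j, j ≠ last → f j + (if j = p then D else 0) ≤ u j) (hul : c ≤ u last) :
    ∃ g : Fin m → ℝ, (∀ j, 0 ≤ g j) ∧ ∑ j, g j = B ∧
      (∀ j, j ≠ p → j ≠ last → f j = 0 → g j = 0) ∧ g last = c ∧ (∀ j, g j ≤ u j) := by
  rcases le_or_gt c (f last) with h | h
  · refine ⟨fun j => f j + (if j = p then f last - c else 0)
      - (if j = last then f last - c else 0), ?_, ?_, ?_, ?_, ?_⟩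
    · intro j
      have := h0 j
      dsimp only
      split_ifs with h1 h2 h2
      · linarith
      · linarith
      · subst h2; linarith
      · linarith
    · simp [Finset.sum_sub_distrib, Finset.sum_add_distrib, hs]
    · intro j h1 h2 h3
      simp [h1, h2, h3]
    · simp [hp.symm]
    · intro j
      by_cases h1 : j = last
      · subst h1; simpa [hp.symm] using hul
      · have := hu j h1
        simp only [h1, if_false]
        split_ifs at this ⊢ <;> linarith
  · have hpos : 0 < B - f last := by linarith
    have hle : (B - c) / (B - f last) ≤ 1 := by
      rw [div_le_one hpos]; linarith
    have hge : 0 ≤ (B - c) / (B - f last) := div_nonneg (by linarith) hpos.le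
    refine ⟨fun j => if j = last then c else f j * ((B - c) / (B - f last)),
      ?_, ?_, ?_, ?_, ?_⟩
    · intro j
      dsimp only
      split_ifs
      · exact hc0
      · exact mul_nonneg (h0 j) hge
    · rw [← Finset.add_sum_erase _ _ (Finset.mem_univ last)]
      rw [← Finset.add_sum_erase _ _ (Finset.mem_univ last)] at hs
      have : ∑ x ∈ Finset.univ.erase last,
          (if x = last then c else f x * ((B - c) / (B - f last)))
          = ∑ x ∈ Finset.univ.erase last, f x * ((B - c) / (B - f last)) :=
        Finset.sum_congr rfl fun x hx => if_neg (Finset.ne_of_mem_erase hx)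
      rw [this, ← Finset.sum_mul, if_pos rfl]
      have h2 : ∑ x ∈ Finset.univ.erase last, f x = B - f last := by linarith
      rw [h2, mul_div_cancel₀ _ hpos.ne']
      ring
    · intro j h1 h2 h3
      simp [h2, h3]
    · simp
    · intro j
      by_cases h1 : j = last
      · subst h1; simpa using hul
      · have h2 := hu j h1
        have h3 : f j * ((B - c) / (B - f last)) ≤ f j := mul_le_of_le_one_right (h0 j) hle
        simp only [h1, if_false]
        split_ifs at h2 <;> linarith

/-- Structure of the optimal last column (Observation underlying `PrpRe`): there is a
vulnerability-minimizing feasible joint matrix in which each file of maximal size puts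
all its budget in the last column, and every other file that can be padded to the
maximal size puts mass `min (b i) bmax` there. -/
theorem prpRe_last_column_structure (n m : ℕ) (hn : 0 < n) (hm : 0 < m)
    (b : Fin n → ℝ) (hb : ∀ i, 0 ≤ b i)
    (l r : Fin n → Fin m) (hlr : ∀ i, l i ≤ r i)
    (last : Fin m) (hlast : ∀ j : Fin m, j ≤ last)
    (hT : ∃ i, l i = last)
    (bmax : ℝ) (hbmax : IsGreatest {x : ℝ | ∃ i, l i = last ∧ b i = x} bmax) :
    ∃ I : Fin n → Fin m → ℝ,
      FeasibleJoint b l r I ∧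
      (∀ J : Fin n → Fin m → ℝ, FeasibleJoint b l r J → Vjoint hn I ≤ Vjoint hn J) ∧
      (∀ i, l i = last → I i last = b i) ∧
      (∀ i, l i ≠ last → r i = last → I i last = min (b i) bmax) := by
  obtain ⟨J, hJ, hmin⟩ := exists_min_feasible hn b hb l r hlr
  obtain ⟨h0, hs, hsupp⟩ := hJ
  obtain ⟨⟨t, ht, htb⟩, hub⟩ := hbmax
  have hbm : ∀ i, l i = last → b i ≤ bmax := fun i hi => hub ⟨i, hi, rfl⟩
  have hbm0 : 0 ≤ bmax := htb ▸ hb t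
  have hle : ∀ i j, J i j ≤ b i := fun i j => by
    rw [← hs i]; exact Finset.single_le_sum (fun k _ => h0 i k) (Finset.mem_univ j)
  have hTl : ∀ i, l i = last → J i last = b i := by
    intro i hi
    rw [← hs i]
    refine (Finset.sum_eq_single last (fun j _ hj => ?_) (by simp)).symm
    exact hsupp i j (Or.inl (hi ▸ lt_of_le_of_ne (hlast j) hj))
  set S : Fin m → ℝ := fun j =>
    Finset.univ.sup' (Finset.univ_nonempty_iff.mpr ⟨⟨0, hn⟩⟩) (fun i => J i j) with hS
  have hJS : ∀ i j, J i j ≤ S j := fun i j =>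
    Finset.le_sup' (fun i => J i j) (Finset.mem_univ i)
  have hD : 0 ≤ S last - bmax := by
    have := hJS t last
    rw [hTl t ht, htb] at this
    linarith
  set D := S last - bmax with hDdef
  let p : Fin m := ⟨last.val - 1, by omega⟩
  let u : Fin m → ℝ := fun j => S j + (if j = p then D else 0) - (if j = last then D else 0)
  have hul : bmax ≤ u last := by
    simp only [u, if_true]
    split_ifs <;> linarith
  have hu : ∀ j, j ≠ last → S j + (if j = p then D else 0) ≤ u j := by
    intro j hj
    simp [u, hj]
  have key : ∀ i, ∃ g : Fin m → ℝ, (∀ j, 0 ≤ g j) ∧ ∑ j, g j = b i ∧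
      (∀ j, (j < l i ∨ r i < j) → g j = 0) ∧ (l i = last → g last = b i) ∧
      (l i ≠ last → r i = last → g last = min (b i) bmax) ∧ ∀ j, g j ≤ u j := by
    intro i
    by_cases hi : l i ≠ last ∧ r i = last
    · obtain ⟨hi1, hi2⟩ := hi
      have hlt : l i < last := lt_of_le_of_ne (hlast _) hi1
      have hlp : l i ≤ p := by
        rw [Fin.le_def]; rw [Fin.lt_def] at hlt; simp only [p]; omega
      have hp : p ≠ last := by
        intro h
        have := congrArg Fin.val h
        rw [Fin.lt_def] at hlt
        simp only [p] at this
        omega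
      obtain ⟨g, g0, gs, gz, gl, gu⟩ := row_fix (b i) (min (b i) bmax) D last p hp (J i) u
        (h0 i) (hs i) (le_min (hb i) hbm0) (min_le_left _ _) hD
        (by
          rcases min_choice (b i) bmax with h | h <;> rw [h]
          · have := hle i last
            linarith
          · have := hJS i last
            linarith)
        (fun j hj => by have := hu j hj; have := hJS i j; linarith)
        ((min_le_right _ _).trans hul)
      refine ⟨g, g0, gs, ?_, fun h => absurd h hi1, fun _ _ => gl, gu⟩
      rintro j (h | h)
      · exact gz j (h.trans_le hlp).ne (h.trans hlt).ne (hsupp i j (Or.inl h))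
      · exact absurd (hlast j) (not_le.mpr (hi2 ▸ h))
    · refine ⟨J i, h0 i, hs i, hsupp i, hTl i, fun h1 h2 => absurd ⟨h1, h2⟩ hi, ?_⟩
      intro j
      by_cases hj : j = last
      · subst hj
        refine le_trans ?_ hul
        by_cases h1 : l i = j
        · exact (hle i j).trans (hbm i h1)
        · have h2 : r i ≠ j := fun h2 => hi ⟨h1, h2⟩
          rw [hsupp i j (Or.inr (lt_of_le_of_ne (hlast _) h2))]
          exact hbm0
      · have h1 := hu j hj
        have h2 := hJS i j
        split_ifs at h1 <;> linarith
  choose I g0 gs gz gT gR gu using key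
  refine ⟨I, ⟨g0, gs, gz⟩, fun K hK => le_trans ?_ (hmin K hK), gT, gR⟩
  calc Vjoint hn I ≤ ∑ j, u j :=
        Finset.sum_le_sum fun j _ => Finset.sup'_le _ _ fun i _ => gu i j
    _ = ∑ j, S j := by
        simp [u, Finset.sum_sub_distrib, Finset.sum_add_distrib]
    _ = Vjoint hn J := rfl
end

section
/- (Correctness of a single Shannon-improving/bandwidth-improving move preserving minimal Rényi leakage.) Let n, m ≥ 1, let p : Fin n → ℝ with p i ≥ 0, and let l, r : Fin n → Fin m with l i ≤ r i. Let f : Fin n → Fin m be feasible (l i ≤ f i ≤ r i), let i₀ : Fin n and j : Fin m satisfy l i₀ ≤ j ≤ r i₀, and suppose there exists a with f a = j and p i₀ ≤ p a. Let f* be f updated so that f* i₀ = j (and f* i = f i for i ≠ i₀). Then f* is feasible and V(f*) ≤ V(f), where V(h) = ∑_{j' : Fin m} max{p i | h i = j'} (maximum of the empty set taken to be 0). In particular, if f has minimal vulnerability among feasible schemes, then f* does as well, so moving a file into any column whose current maximum frequency is at least its own preserves minimal Rényi min-entropy leakage. -/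
/-- A single move preserving minimal Rényi leakage: moving file `i₀` into a feasible
column `j` already containing some file `a` with `p i₀ ≤ p a` yields a feasible scheme
with no larger vulnerability; in particular it preserves minimal vulnerability. -/
theorem move_preserves_min_vuln (n m : ℕ) (hn : 0 < n) (hm : 0 < m)
    (p : Fin n → ℝ) (hp : ∀ i, 0 ≤ p i)
    (l r : Fin n → Fin m) (hlr : ∀ i, l i ≤ r i)
    (f : Fin n → Fin m) (hf : ∀ i, l i ≤ f i ∧ f i ≤ r i)
    (i₀ : Fin n) (j : Fin m) (hij : l i₀ ≤ j ∧ j ≤ r i₀)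
    (ha : ∃ a, f a = j ∧ p i₀ ≤ p a)
    (fstar : Fin n → Fin m) (hfstar : ∀ i, fstar i = if i = i₀ then j else f i) :
    (∀ i, l i ≤ fstar i ∧ fstar i ≤ r i) ∧
      V p fstar ≤ V p f ∧
      ((∀ g : Fin n → Fin m, (∀ i, l i ≤ g i ∧ g i ≤ r i) → V p f ≤ V p g) →
        ∀ g : Fin n → Fin m, (∀ i, l i ≤ g i ∧ g i ≤ r i) → V p fstar ≤ V p g) := by
  have hV : V p fstar ≤ V p f := by
    unfold V
    refine Finset.sum_le_sum fun k _ => ?_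
    rw [Finset.fold_max_le]
    refine ⟨(Finset.le_fold_max _).2 (Or.inl le_rfl), fun i hi => ?_⟩
    have hi' : fstar i = k := by simpa using hi
    rw [hfstar] at hi'
    rw [Finset.le_fold_max]
    right
    by_cases h : i = i₀
    · obtain ⟨a, ha1, ha2⟩ := ha
      rw [if_pos h] at hi'
      exact ⟨a, by simp [ha1, hi'], h ▸ ha2⟩
    · rw [if_neg h] at hi'
      exact ⟨i, by simp [hi'], le_rfl⟩
  refine ⟨fun i => ?_, hV, fun hmin g hg => hV.trans (hmin g hg)⟩
  rw [hfstar]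
  by_cases h : i = i₀
  · rw [if_pos h, h]
    exact hij
  · rw [if_neg h]
    exact hf i
end

section
/- (Decomposition underlying the PopRe dynamic program.) Let n, m ≥ 1, let p : Fin n → ℝ with p i ≥ 0, and let l, r : Fin n → Fin m with l i ≤ r i for all i. Fix a column k : Fin m and suppose the set E = {i | l i ≤ k ∧ k ≤ r i} is nonempty; let A = {i | r i < k} and B = {i | k < l i} (so Fin n is partitioned into E, A, B). Then the minimum, over all feasible schemes f : Fin n → Fin m (l i ≤ f i ≤ r i) such that f i = k for every i ∈ E, of V(f) = ∑_{j} max{p i | f i = j}, equals (max over i ∈ E of p i) + D(A) + D(B), where for a subset S ⊆ Fin n, D(S) denotes the minimum over all feasible schemes g of ∑_{j : Fin m} max{p i | i ∈ S ∧ g i = j} (maxima over empty sets taken to be 0). (Padding all eligible files to column k contributes exactly the maximal eligible frequency, and the remaining files split into two independent subproblems using disjoint sets of columns.) -/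
/-- The partial vulnerability of a scheme `g`, counting only files in the set `S`:
`∑_j max {p i | i ∈ S ∧ g i = j}` (maxima of empty sets taken to be `0`). -/
noncomputable def Vpart {n m : ℕ} (p : Fin n → ℝ) (S : Fin n → Prop) [DecidablePred S]
    (g : Fin n → Fin m) : ℝ :=
  ∑ j : Fin m, (Finset.univ.filter (fun i => S i ∧ g i = j)).fold max 0 p

/-- The vulnerability of a feasible scheme sending all eligible files to `k` splits. -/
theorem V_split (n m : ℕ)
    (p : Fin n → ℝ) (hp : ∀ i, 0 ≤ p i)
    (l r : Fin n → Fin m)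
    (k : Fin m)
    (pE : ℝ) (hpE : IsGreatest {x : ℝ | ∃ i, (l i ≤ k ∧ k ≤ r i) ∧ p i = x} pE)
    (f : Fin n → Fin m) (hf : ∀ i, l i ≤ f i ∧ f i ≤ r i)
    (hfk : ∀ i, l i ≤ k → k ≤ r i → f i = k) :
    V p f = pE + Vpart p (fun i => r i < k) f + Vpart p (fun i => k < l i) f := by
  have h1 : pE = ∑ j : Fin m, (if j = k then pE else 0) := by simp
  unfold V Vpart
  rw [h1, ← Finset.sum_add_distrib, ← Finset.sum_add_distrib]
  refine Finset.sum_congr rfl fun j _ => ?_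
  have hA : k ≤ j → Finset.univ.filter (fun i => r i < k ∧ f i = j) = ∅ := by
    intro hj
    refine Finset.filter_eq_empty_iff.2 fun i _ h => ?_
    have := (hf i).2
    rw [h.2] at this
    exact absurd (lt_of_le_of_lt this h.1) (not_lt.2 hj)
  have hB : j ≤ k → Finset.univ.filter (fun i => k < l i ∧ f i = j) = ∅ := by
    intro hj
    refine Finset.filter_eq_empty_iff.2 fun i _ h => ?_
    have := (hf i).1
    rw [h.2] at this
    exact absurd (lt_of_lt_of_le h.1 this) (not_lt.2 hj)
  rcases lt_trichotomy j k with hj | hj | hj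
  · have : Finset.univ.filter (fun i => f i = j)
        = Finset.univ.filter (fun i => r i < k ∧ f i = j) := by
      refine Finset.filter_congr fun i _ => ⟨fun h => ⟨?_, h⟩, fun h => h.2⟩
      by_contra hc
      have h2 := hfk i ((hf i).1.trans (h.trans_le hj.le)) (not_lt.1 hc)
      exact hj.ne (h.symm.trans h2)
    rw [hB hj.le, this]
    simp [hj.ne]
  · subst hj
    rw [hA le_rfl, hB le_rfl]
    simp only [if_true, Finset.fold_empty, add_zero]
    obtain ⟨⟨i, hi, hpi⟩, hub⟩ := hpE
    apply le_antisymm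
    · rw [Finset.fold_max_le]
      refine ⟨hpi ▸ hp i, fun x hx => hub ⟨x, ?_, rfl⟩⟩
      have hx' : f x = j := by simpa using hx
      have := hf x
      rwa [hx'] at this
    · rw [Finset.le_fold_max]
      exact Or.inr ⟨i, by simpa using hfk i hi.1 hi.2, hpi.ge⟩
  · have : Finset.univ.filter (fun i => f i = j)
        = Finset.univ.filter (fun i => k < l i ∧ f i = j) := by
      refine Finset.filter_congr fun i _ => ⟨fun h => ⟨?_, h⟩, fun h => h.2⟩
      by_contra hc
      have h2 := hfk i (not_lt.1 hc) ((hj.le.trans h.ge).trans (hf i).2)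
      exact hj.ne' (h.symm.trans h2)
    rw [hA hj.le, this]
    simp [hj.ne']

/-- The partial vulnerability only depends on the scheme on `S`. -/
theorem Vpart_congr {n m : ℕ} (p : Fin n → ℝ) (S : Fin n → Prop) [DecidablePred S]
    (g g' : Fin n → Fin m) (h : ∀ i, S i → g i = g' i) : Vpart p S g = Vpart p S g' := by
  unfold Vpart
  refine Finset.sum_congr rfl fun j _ => ?_
  congr 1
  refine Finset.filter_congr fun i _ => and_congr_right fun hi => ?_
  rw [h i hi]

/-- Decomposition underlying the `PopRe` dynamic program: the minimal vulnerability over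
feasible schemes padding every eligible file to column `k` equals the maximal eligible
frequency plus the minimal partial vulnerabilities of the two independent subproblems
for the files below and above column `k`. -/
theorem popRe_decomposition (n m : ℕ) (hn : 0 < n) (hm : 0 < m)
    (p : Fin n → ℝ) (hp : ∀ i, 0 ≤ p i)
    (l r : Fin n → Fin m) (hlr : ∀ i, l i ≤ r i)
    (k : Fin m) (hE : ∃ i, l i ≤ k ∧ k ≤ r i)
    (pE : ℝ) (hpE : IsGreatest {x : ℝ | ∃ i, (l i ≤ k ∧ k ≤ r i) ∧ p i = x} pE)
    (dA : ℝ)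
    (hdA : IsLeast {x : ℝ | ∃ g : Fin n → Fin m,
        (∀ i, l i ≤ g i ∧ g i ≤ r i) ∧ x = Vpart p (fun i => r i < k) g} dA)
    (dB : ℝ)
    (hdB : IsLeast {x : ℝ | ∃ g : Fin n → Fin m,
        (∀ i, l i ≤ g i ∧ g i ≤ r i) ∧ x = Vpart p (fun i => k < l i) g} dB) :
    IsLeast {x : ℝ | ∃ f : Fin n → Fin m,
        (∀ i, l i ≤ f i ∧ f i ≤ r i) ∧ (∀ i, l i ≤ k → k ≤ r i → f i = k) ∧ x = V p f}
      (pE + dA + dB) := by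
  constructor
  · obtain ⟨gA, hgA, eA⟩ := hdA.1
    obtain ⟨gB, hgB, eB⟩ := hdB.1
    let f : Fin n → Fin m := fun i => if r i < k then gA i else if k < l i then gB i else k
    have hf : ∀ i, l i ≤ f i ∧ f i ≤ r i := by
      intro i
      by_cases h1 : r i < k
      · simpa [f, h1] using hgA i
      · by_cases h2 : k < l i
        · simpa [f, h1, h2] using hgB i
        · simpa [f, h1, h2] using And.intro (not_lt.1 h2) (not_lt.1 h1)
    have hfk : ∀ i, l i ≤ k → k ≤ r i → f i = k := by
      intro i h1 h2
      simp [f, not_lt.2 h1, not_lt.2 h2]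
    refine ⟨f, hf, hfk, ?_⟩
    rw [V_split n m p hp l r k pE hpE f hf hfk, eA, eB]
    congr 1
    · congr 1
      apply Vpart_congr
      intro i hi
      simp [f, hi]
    · apply Vpart_congr
      intro i hi
      have : ¬ r i < k := not_lt.2 (hi.le.trans (hlr i))
      simp [f, hi, this]
  · rintro x ⟨f, hf, hfk, rfl⟩
    rw [V_split n m p hp l r k pE hpE f hf hfk]
    have h1 := hdA.2 ⟨f, hf, rfl⟩
    have h2 := hdB.2 ⟨f, hf, rfl⟩
    linarith
end
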